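/- Let n ≥ 1 and let λ = (1^{m₁} 2^{m₂} ⋯ n^{m_n}) be a partition of n (so Σ_i i·m_i = n). For integers i ≥ 1 and k ≥ 0, define f_{i,k} = (1/i) Σ_{d ∣ i} μ(d) k^{i/d}, a nonnegative integer. Then the following identity of formal power series in ℚ[[t]] holds: Σ_{π ∈ S_n, cycle type(π) = λ} t^{des(π)+1} = (1−t)^{n+1} · Σ_{k ≥ 0} t^k · Π_{1 ≤ i ≤ n, m_i ≥ 1} binom(f_{i,k} + m_i − 1, m_i). -/

import Mathlib

open scoped Classical

noncomputable section

def oneLine (n : ℕ) (π : Equiv.Perm (Fin n)) (i : ℕ) : ℕ :=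
  if h : 1 ≤ i ∧ i ≤ n then (π ⟨i - 1, by omega⟩).val + 1 else 0

def des (n : ℕ) (π : Equiv.Perm (Fin n)) : ℕ :=
  ((Finset.Icc 1 (n - 1)).filter fun i => oneLine n π (i + 1) < oneLine n π i).card

def pk (n : ℕ) (π : Equiv.Perm (Fin n)) : ℕ :=
  ((Finset.Icc 2 (n - 1)).filter fun i =>
    oneLine n π (i - 1) < oneLine n π i ∧ oneLine n π (i + 1) < oneLine n π i).card

def lpk (n : ℕ) (π : Equiv.Perm (Fin n)) : ℕ :=
  ((Finset.Icc 1 (n - 1)).filter fun i =>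
    oneLine n π (i - 1) < oneLine n π i ∧ oneLine n π (i + 1) < oneLine n π i).card

def pval (n : ℕ) (π : Equiv.Perm (Fin n)) : ℕ :=
  ((Finset.Icc 2 (n - 1)).filter fun i =>
    oneLine n π i < oneLine n π (i - 1) ∧ oneLine n π i < oneLine n π (i + 1)).card

def udr (n : ℕ) (π : Equiv.Perm (Fin n)) : ℕ := lpk n π + pval n π + 1

def fullCycleType (n : ℕ) (π : Equiv.Perm (Fin n)) : Multiset ℕ :=
  π.cycleType + Multiset.replicate (n - π.support.card) 1

def numCycles (n : ℕ) (π : Equiv.Perm (Fin n)) : ℕ := Multiset.card (fullCycleType n π)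

def numOddCycles (n : ℕ) (π : Equiv.Perm (Fin n)) : ℕ :=
  Multiset.card ((fullCycleType n π).filter fun p => p % 2 = 1)

def IsCyclicPerm (n : ℕ) (π : Equiv.Perm (Fin n)) : Prop :=
  fullCycleType n π = {n}

def cyclicSet (n : ℕ) : Finset (Equiv.Perm (Fin n)) :=
  Finset.univ.filter fun π => IsCyclicPerm n π

def invSet (n : ℕ) : Finset (Equiv.Perm (Fin n)) :=
  Finset.univ.filter fun π => π ^ 2 = 1

def eulerianA (m : ℕ) : Polynomial ℚ :=
  ∑ π : Equiv.Perm (Fin m), Polynomial.X ^ (des m π + 1)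

def peakP (m : ℕ) : Polynomial ℚ :=
  ∑ π : Equiv.Perm (Fin m), Polynomial.X ^ (pk m π + 1)

def leftPeakP (m : ℕ) : Polynomial ℚ :=
  ∑ π : Equiv.Perm (Fin m), Polynomial.X ^ (lpk m π)

def cnk (n k : ℕ) : ℕ :=
  (Finset.univ.filter fun π : Equiv.Perm (Fin n) =>
    (∀ p ∈ fullCycleType n π, ¬ (4 ∣ p)) ∧ numCycles n (π ^ 2) = k).card

def bnk (n k : ℕ) : ℕ :=
  (Finset.univ.filter fun π : Equiv.Perm (Fin n) => numCycles n (π ^ 2) = k).card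

def dnk (n k : ℕ) : ℕ :=
  (Finset.univ.filter fun π : Equiv.Perm (Fin n) => numOddCycles n (π ^ 2) = k).card

/-!
Call a weakly increasing word `w : Fin n → Fin k` compatible with a permutation `π` if it increases
strictly across each descent of `π`. There are `(n + k - (des π + 1)).choose n` such words, and the
generating function of these numbers over `k` is `t ^ (des π + 1) / (1 - t) ^ (n + 1)`. So the left
side divided by `(1 - t) ^ (n + 1)` counts the compatible pairs `(π, w)` with `π` of type `m`.

The Gessel–Reutenauer correspondence sends such a pair to the multiset of the itineraries
`w i, w (π i), w (π (π i)), …` of all indices `i`. It is a bijection onto the shift-invariant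
multisets of `n` periodic words, and it turns a cycle of `π` into a cycle of the shift of the same
length. By Möbius inversion the shift has `f i k` cycles of length `i`, and a multiset of `m i` of
them can be chosen in `(f i k + m i - 1).choose (m i)` ways.
-/

section Descents

lemma X_pow_eq_one_sub_X_pow_mul_mk_choose (R : Type*) [CommRing R] {n d : ℕ} (hd : d ≤ n) :
    (PowerSeries.X : PowerSeries R) ^ d =
      (1 - PowerSeries.X) ^ (n + 1) * PowerSeries.mk fun k => ((n + k - d).choose n : R) := by
  have shift_coeff : PowerSeries.mk (fun k => ((n + k - d).choose n : R)) =
      PowerSeries.X ^ d * PowerSeries.mk fun k => ((n + k).choose n : R) := by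
    ext k
    rw [PowerSeries.coeff_X_pow_mul', PowerSeries.coeff_mk]
    split_ifs with h
    · rw [PowerSeries.coeff_mk, Nat.add_sub_assoc h]
    · rw [Nat.choose_eq_zero_of_lt (by lia), Nat.cast_zero]
  rw [shift_coeff, ← PowerSeries.mk_one_pow_eq_mk_choose_add, mul_left_comm, ← mul_pow,
    mul_comm (1 - _), PowerSeries.mk_one_mul_one_sub_eq_one, one_pow, mul_one]

lemma card_fin_orderEmbedding (n M : ℕ) : Nat.card (Fin n ↪o Fin M) = M.choose n := by
  rw [Nat.card_congr Set.powersetCard.ofFinEmbEquiv, Set.powersetCard.card, Nat.card_fin]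

lemma count_add_le_add_count_of_strictMono (p : ℕ → Prop) [DecidablePred p] {N : ℕ}
    {g : Fin (N + 1) → ℕ} (hg : StrictMono g) {i j : Fin (N + 1)} (hij : i ≤ j) :
    g i + Nat.count p j ≤ g j + Nat.count p i := by
  have mono : Monotone fun i : Fin (N + 1) => (g i : ℤ) - Nat.count p i := by
    refine Fin.monotone_iff_le_succ.2 fun i => ?_
    have := hg i.castSucc_lt_succ
    simp only [Fin.val_castSucc, Fin.val_succ, Nat.count_succ]
    split_ifs <;> lia
  have := mono hij
  lia

lemma card_strictMono_add_count (p : ℕ → Prop) [DecidablePred p] (N k : ℕ) :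
    Nat.card {w : Fin (N + 1) → Fin k //
        StrictMono fun i : Fin (N + 1) => (w i : ℕ) + Nat.count p i} =
      (k + Nat.count p N).choose (N + 1) := by
  rw [← card_fin_orderEmbedding]
  have lt_bound (w : Fin (N + 1) → Fin k) (i : Fin (N + 1)) :
      (w i : ℕ) + Nat.count p i < k + Nat.count p N :=
    add_lt_add_of_lt_of_le (w i).2 (Nat.count_monotone p i.is_le)
  refine Nat.card_congr (Equiv.ofBijective
    (fun w => OrderEmbedding.ofStrictMono (fun i => ⟨w.1 i + Nat.count p i, lt_bound w.1 i⟩) w.2)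
    ⟨fun w w' h => ?_, fun g => ?_⟩)
  · ext i
    have := congrArg Fin.val (DFunLike.congr_fun h i)
    exact Nat.add_right_cancel this
  · have hg : StrictMono fun i => (g i : ℕ) := g.strictMono
    have count_le (i : Fin (N + 1)) : Nat.count p i ≤ g i := by
      simpa using
        (Nat.le_add_left ..).trans (count_add_le_add_count_of_strictMono p hg (Fin.zero_le i))
    have lt_k (i : Fin (N + 1)) : (g i : ℕ) - Nat.count p i < k := by
      have := count_add_le_add_count_of_strictMono p hg (Fin.le_last i)
      have := (g (Fin.last N)).2
      have := count_le i
      simp only [Fin.val_last] at *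
      lia
    refine ⟨⟨fun i => ⟨g i - Nat.count p i, lt_k i⟩, ?_⟩, ?_⟩
    · simpa only [fun i => Nat.sub_add_cancel (count_le i)] using hg
    · ext i
      exact Nat.sub_add_cancel (count_le i)

/-- A word `w` is compatible with a self-map `σ` of its index set if it is weakly increasing and
`σ` is increasing on each block of equal letters. For a permutation `σ` of `Fin n` this says that
`w` increases strictly across each descent, so that the number of such words determines `des`. -/
def Compatible {ι A : Type*} [LinearOrder ι] [LinearOrder A] (σ : ι → ι) (w : ι → A) : Prop :=
  StrictMono fun i => toLex (w i, σ i)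

/-- `IsDescent π j` says that the one-line notation of `π` descends at its zero-based
position `j`, that is, at position `j + 1` in the numbering of `des`. -/
def IsDescent {n : ℕ} (π : Equiv.Perm (Fin n)) (j : ℕ) : Prop :=
  oneLine n π (j + 2) < oneLine n π (j + 1)

lemma isDescent_iff {N : ℕ} (π : Equiv.Perm (Fin (N + 1))) (i : Fin N) :
    IsDescent π i ↔ π i.succ < π i.castSucc := by
  have := i.2
  have hsucc : oneLine (N + 1) π (i + 2) = π i.succ + 1 := dif_pos (by lia)
  have hcast : oneLine (N + 1) π (i + 1) = π i.castSucc + 1 := dif_pos (by lia)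
  rw [IsDescent, hsucc, hcast, Fin.lt_def, add_lt_add_iff_right]

lemma des_add_count_not_isDescent (N : ℕ) (π : Equiv.Perm (Fin (N + 1))) :
    des (N + 1) π + Nat.count (fun j => ¬ IsDescent π j) N = N := by
  have hdes : des (N + 1) π = ((Finset.range N).filter (IsDescent π)).card := by
    refine (Finset.card_bij (fun j _ => j + 1) (fun j hj => ?_) (by simp) fun i hi => ?_).symm
    · simpa [Nat.succ_le_iff, IsDescent] using hj
    · obtain ⟨⟨hi1, hiN⟩, hdesc⟩ : (1 ≤ i ∧ i ≤ N) ∧ _ := by simpa using hi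
      obtain ⟨j, rfl⟩ := Nat.exists_eq_add_of_le' hi1
      exact ⟨j, by simpa using ⟨hiN, hdesc⟩, rfl⟩
  rw [hdes, Nat.count_eq_card_filter_range, Finset.card_filter_add_card_filter_not,
    Finset.card_range]

lemma compatible_iff_strictMono_add_count {N k : ℕ} (π : Equiv.Perm (Fin (N + 1)))
    (w : Fin (N + 1) → Fin k) :
    Compatible π w ↔
      StrictMono fun i : Fin (N + 1) => (w i : ℕ) + Nat.count (fun j => ¬ IsDescent π j) i := by
  rw [Compatible, Fin.strictMono_iff_lt_succ, Fin.strictMono_iff_lt_succ]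
  refine forall_congr' fun i => ?_
  have hne : π i.castSucc ≠ π i.succ := π.injective.ne i.castSucc_lt_succ.ne
  simp only [Prod.Lex.toLex_lt_toLex, Fin.val_castSucc, Fin.val_succ, Nat.count_succ,
    isDescent_iff, Fin.lt_def, Fin.ext_iff]
  split_ifs <;> lia

lemma card_compatible {n : ℕ} (hn : n ≠ 0) (k : ℕ) (π : Equiv.Perm (Fin n)) :
    Nat.card {w : Fin n → Fin k // Compatible π w} = (n + k - (des n π + 1)).choose n := by
  obtain ⟨N, rfl⟩ := Nat.exists_eq_succ_of_ne_zero hn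
  have hdes := des_add_count_not_isDescent N π
  simp only [compatible_iff_strictMono_add_count]
  rw [card_strictMono_add_count]
  congr 1
  lia

lemma des_lt {n : ℕ} (hn : n ≠ 0) (π : Equiv.Perm (Fin n)) : des n π < n := by
  obtain ⟨N, rfl⟩ := Nat.exists_eq_succ_of_ne_zero hn
  have := des_add_count_not_isDescent N π
  lia

end Descents

section InvariantMultisets

open Function

variable {X : Type*} {f : X → X} {M : Multiset X}

lemma count_map_apply_of_periodic (hM : ∀ x ∈ M, x ∈ periodicPts f) {x : X}
    (hx : x ∈ periodicPts f) : (M.map f).count (f x) = M.count x := by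
  rw [Multiset.count_map, Multiset.count_eq_card_filter_eq]
  exact congrArg _ <| Multiset.filter_congr fun y hy =>
    (bijOn_periodicPts f).injOn.eq_iff hx (hM y hy)

lemma map_eq_self_iff_count_apply (hM : ∀ x ∈ M, x ∈ periodicPts f) :
    M.map f = M ↔ ∀ x ∈ periodicPts f, M.count (f x) = M.count x := by
  refine ⟨fun h x hx => by rw [← count_map_apply_of_periodic hM hx, h], fun h => ?_⟩
  ext y
  by_cases hy : y ∈ periodicPts f
  · obtain ⟨x, hx, rfl⟩ := (bijOn_periodicPts f).surjOn hy
    rw [count_map_apply_of_periodic hM hx, h x hx]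
  · have hmap : y ∉ M.map f := fun h => by
      obtain ⟨x, hx, rfl⟩ := Multiset.mem_map.1 h
      exact hy ((bijOn_periodicPts f).mapsTo (hM x hx))
    rw [Multiset.count_eq_zero_of_notMem hmap, Multiset.count_eq_zero_of_notMem (hy ∘ hM y)]

end InvariantMultisets

/-- Infinite words over `A`, ordered lexicographically. -/
abbrev Word (A : Type*) := Lex (ℕ → A)

namespace Word

variable {A : Type*}

/-- The first letter of an infinite word. -/
def head (x : Word A) : A := ofLex x 0

/-- The one-sided shift, which deletes the first letter of an infinite word. -/
def shift (x : Word A) : Word A := toLex fun j => ofLex x (j + 1)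

lemma ofLex_iterate_shift (x : Word A) (p j : ℕ) :
    ofLex (shift^[p] x) j = ofLex x (j + p) := by
  induction p generalizing x with
  | zero => rfl
  | succ _ ih => exact ih (shift x)

lemma strictMono_head_shift [LinearOrder A] :
    StrictMono fun x : Word A => toLex (head x, shift x) := by
  rintro x y ⟨j, hagree, hlt⟩
  cases j with
  | zero => exact Prod.Lex.toLex_lt_toLex.2 (Or.inl hlt)
  | succ j =>
    exact Prod.Lex.toLex_lt_toLex.2 <| Or.inr
      ⟨hagree 0 j.succ_pos, j, fun q hq => hagree (q + 1) (Nat.succ_lt_succ hq), hlt⟩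

end Word

section Itineraries

open Function Word

variable {ι A : Type*}

/-- The itinerary of `i` under `σ`: the word read off by `w` along the forward orbit of `i`. -/
def itinerary (σ : ι → ι) (w : ι → A) (i : ι) : Word A :=
  toLex fun j => w (σ^[j] i)

lemma semiconj_itinerary (σ : ι → ι) (w : ι → A) : Semiconj (itinerary σ w) σ shift :=
  fun _ => rfl

lemma itinerary_head_comp {σ : ι → ι} {V : ι → Word A} (h : Semiconj V σ shift) :
    itinerary σ (head ∘ V) = V := by
  funext i
  refine ofLex_inj.1 (funext fun j => ?_)
  calc head (V (σ^[j] i)) = head (shift^[j] (V i)) := congrArg head ((h.iterate_right j).eq i)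
    _ = ofLex (V i) j := by rw [head, ofLex_iterate_shift, zero_add]

lemma strictMono_apply_eq_self [LinearOrder ι] [Finite ι] {g : ι → ι} (hg : StrictMono g) (i : ι) :
    g i = i :=
  le_antisymm hg.apply_le hg.le_apply

namespace Compatible

variable [LinearOrder ι] [LinearOrder A] {σ : ι → ι} {w : ι → A}

lemma apply_lt_apply (h : Compatible σ w) {i j : ι} (hij : i < j) (hw : w i = w j) :
    σ i < σ j := by
  simpa [hw] using Prod.Lex.toLex_lt_toLex.1 (h hij)

lemma monotone (h : Compatible σ w) : Monotone w :=
  fun _ _ hij => Prod.Lex.monotone_fst _ _ (StrictMono.monotone h hij)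

lemma iterate_lt_iterate (h : Compatible σ w) {i j : ι} (hij : i < j) {p : ℕ}
    (hagree : ∀ q < p, w (σ^[q] i) = w (σ^[q] j)) : σ^[p] i < σ^[p] j := by
  induction p with
  | zero => exact hij
  | succ p ih =>
    rw [iterate_succ_apply', iterate_succ_apply']
    exact h.apply_lt_apply (ih fun q hq => hagree q (hq.trans p.lt_succ_self))
      (hagree p p.lt_succ_self)

lemma monotone_itinerary (h : Compatible σ w) : Monotone (itinerary σ w) := by
  refine monotone_iff_forall_lt.2 fun i j hij => not_lt.1 ?_
  rintro ⟨p, hagree, hlt⟩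
  exact hlt.not_ge (h.monotone (h.iterate_lt_iterate hij fun q hq => (hagree q hq).symm).le)

lemma minimalPeriod_itinerary [Finite ι] (h : Compatible σ w) (i : ι) :
    minimalPeriod shift (itinerary σ w i) = minimalPeriod σ i := by
  have hsemi (p : ℕ) := (semiconj_itinerary σ w).iterate_right p
  refine minimalPeriod_eq_minimalPeriod_iff.2 fun p => ⟨fun hp => ?_, fun hp =>
    hp.map (semiconj_itinerary σ w)⟩
  -- On the finite set of indices sharing the itinerary of `i`, `σ^[p]` is strictly increasing.
  let g : {j // itinerary σ w j = itinerary σ w i} → {j // itinerary σ w j = itinerary σ w i} :=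
    fun j => ⟨σ^[p] j, by rw [(hsemi p).eq, j.2, hp.eq]⟩
  have hg : StrictMono g := fun j k hjk => h.iterate_lt_iterate hjk fun q _ =>
    congrFun (congrArg ofLex (j.2.trans k.2.symm)) q
  exact congrArg Subtype.val (strictMono_apply_eq_self hg ⟨i, rfl⟩)

lemma perm_eq_of_itinerary_eq [Finite ι] {π π' : Equiv.Perm ι} {w' : ι → A}
    (h : Compatible π w) (h' : Compatible π' w') (heq : itinerary π w = itinerary π' w') :
    π = π' := by
  set V := itinerary π w
  have hV : Semiconj V π shift := semiconj_itinerary π w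
  have hV' : Semiconj V π' shift := heq ▸ semiconj_itinerary π' w'
  have hmono' : Monotone V := heq ▸ h'.monotone_itinerary
  have hmem (i : ι) : V i ∈ periodicPts shift :=
    hV.mapsTo_periodicPts (π.injective.mem_periodicPts i)
  have strictMono : StrictMono (π' ∘ π.symm) := by
    intro a b hab
    obtain ⟨i, rfl⟩ := π.surjective a
    obtain ⟨j, rfl⟩ := π.surjective b
    simp only [comp_apply, Equiv.symm_apply_apply]
    rcases (h.monotone_itinerary hab.le).lt_or_eq with hlt | hVeq
    · refine hmono'.reflect_lt ?_
      rwa [hV'.eq, hV'.eq, ← hV.eq, ← hV.eq]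
    · have hVij : V i = V j := (bijOn_periodicPts _).injOn (hmem i) (hmem j) <| by
        rw [← hV.eq, ← hV.eq]; exact hVeq
      have hij : i < j := by
        refine lt_of_not_ge fun hji => ?_
        rcases hji.eq_or_lt with rfl | hji
        · exact hab.false
        · exact hab.not_gt (h.apply_lt_apply hji (congrArg head hVij.symm))
      rw [heq] at hVij
      exact h'.apply_lt_apply hij (congrArg head hVij)
  ext i
  simpa using (strictMono_apply_eq_self strictMono (π i)).symm

lemma comp_orderIso {κ : Type*} [LinearOrder κ] (h : Compatible σ w) (e : κ ≃o ι) :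
    Compatible (e.symm ∘ σ ∘ e) (w ∘ e) := by
  intro i j hij
  simpa [Prod.Lex.toLex_lt_toLex] using Prod.Lex.toLex_lt_toLex.1 (h (e.strictMono hij))

end Compatible

/-- The multiset of the itineraries of all indices. Together with compatibility it determines both
the permutation and the word, which is the Gessel–Reutenauer correspondence. -/
def itineraries [Fintype ι] (σ : ι → ι) (w : ι → A) : Multiset (Word A) :=
  Finset.univ.val.map (itinerary σ w)

lemma map_univ_val_comp_equiv {κ : Type*} {β : Type*} [Fintype ι] [Fintype κ] (e : κ ≃ ι)
    (V : ι → β) : Finset.univ.val.map (V ∘ e) = Finset.univ.val.map V := by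
  rw [← Multiset.map_map, ← Finset.map_univ_equiv e]
  rfl

lemma map_shift_itineraries [Fintype ι] (π : Equiv.Perm ι) (w : ι → A) :
    (itineraries π w).map shift = itineraries π w := by
  rw [itineraries, Multiset.map_map, ← (semiconj_itinerary π w).comp_eq]
  exact map_univ_val_comp_equiv π _

lemma Compatible.map_minimalPeriod_itineraries [Fintype ι] [LinearOrder ι] [LinearOrder A]
    {σ : ι → ι} {w : ι → A} (h : Compatible σ w) :
    (itineraries σ w).map (minimalPeriod shift) = Finset.univ.val.map (minimalPeriod σ) := by
  rw [itineraries, Multiset.map_map]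
  exact congrArg (Multiset.map · _) (funext h.minimalPeriod_itinerary)

lemma monotone_eq_of_map_univ_val_eq {α : Type*} [LinearOrder α] {n : ℕ} {V V' : Fin n → α}
    (hV : Monotone V) (hV' : Monotone V')
    (h : (Finset.univ : Finset (Fin n)).val.map V = Finset.univ.val.map V') : V = V' := by
  rw [Fin.univ_val_map, Fin.univ_val_map, Multiset.coe_eq_coe] at h
  exact List.ofFn_injective (h.eq_of_sortedLE hV.sortedLE_ofFn hV'.sortedLE_ofFn)

lemma Compatible.ext_itineraries [LinearOrder A] {n : ℕ} {π π' : Equiv.Perm (Fin n)}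
    {w w' : Fin n → A} (h : Compatible π w) (h' : Compatible π' w')
    (heq : itineraries π w = itineraries π' w') : π = π' ∧ w = w' := by
  have hV : itinerary π w = itinerary π' w' :=
    monotone_eq_of_map_univ_val_eq h.monotone_itinerary h'.monotone_itinerary heq
  exact ⟨h.perm_eq_of_itinerary_eq h' hV, congrArg (head ∘ ·) hV⟩

lemma strictMono_head_prodMap_shift [LinearOrder A] :
    StrictMono fun t : Word A ×ₗ ℕ =>
      toLex (head (ofLex t).1, (toLex (Prod.map shift id (ofLex t)) : Word A ×ₗ ℕ)) := by
  intro t u htu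
  rcases Prod.Lex.lt_iff.1 htu with hlt | ⟨heq, hlt⟩
  · rcases Prod.Lex.toLex_lt_toLex.1 (strictMono_head_shift hlt) with h | ⟨h, h'⟩
    · exact Prod.Lex.toLex_lt_toLex.2 (Or.inl h)
    · exact Prod.Lex.toLex_lt_toLex.2 (Or.inr ⟨h, Prod.Lex.toLex_lt_toLex.2 (Or.inl h')⟩)
  · exact Prod.Lex.toLex_lt_toLex.2 <| Or.inr
      ⟨congrArg head heq, Prod.Lex.toLex_lt_toLex.2 (Or.inr ⟨congrArg shift heq, hlt⟩)⟩

/-- The elements of a multiset of words with their copies numbered from `0`, ordered by word and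
then by number. This chain stands for `Fin n` when a permutation is built from a multiset. -/
def copies (M : Multiset (Word A)) : Finset (Word A ×ₗ ℕ) :=
  M.toEnumFinset.map toLex.toEmbedding

lemma mem_copies {M : Multiset (Word A)} {t : Word A ×ₗ ℕ} :
    t ∈ copies M ↔ (ofLex t).2 < M.count (ofLex t).1 := by
  simp [copies, Multiset.mem_toEnumFinset]

lemma card_copies (M : Multiset (Word A)) : (copies M).card = M.card := by
  rw [copies, Finset.card_map, Multiset.card_toEnumFinset]

lemma map_copies (M : Multiset (Word A)) :
    Finset.univ.val.map (fun t : copies M => (ofLex (t : Word A ×ₗ ℕ)).1) = M := by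
  calc Finset.univ.val.map (fun t : copies M => (ofLex (t : Word A ×ₗ ℕ)).1)
      = (copies M).val.map fun t => (ofLex t).1 := Multiset.attach_map_val' _ _
    _ = M.toEnumFinset.val.map Prod.fst := Multiset.map_map ..
    _ = M := M.map_toEnumFinset_fst

lemma exists_perm_copies {M : Multiset (Word A)} (hM : ∀ x ∈ M, x ∈ periodicPts shift)
    (hshift : M.map shift = M) :
    ∃ P : Equiv.Perm (copies M),
      ∀ t, (P t : Word A ×ₗ ℕ) = toLex (Prod.map shift id (ofLex t.1)) := by
  have hcount := (map_eq_self_iff_count_apply hM).1 hshift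
  have periodic (t : copies M) : (ofLex t.1).1 ∈ periodicPts shift :=
    hM _ <| Multiset.count_pos.1 <| (Nat.zero_le _).trans_lt (mem_copies.1 t.2)
  let P : copies M → copies M := fun t => ⟨toLex (Prod.map shift id (ofLex t.1)),
    mem_copies.2 <| (mem_copies.1 t.2).trans_eq (hcount _ (periodic t)).symm⟩
  have hP : Injective P := fun t u htu => by
    have h := Prod.ext_iff.1 (toLex_inj.1 (congrArg Subtype.val htu))
    exact Subtype.ext <| ofLex_inj.1 <| Prod.ext
      ((bijOn_periodicPts shift).injOn (periodic t) (periodic u) h.1) h.2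
  exact ⟨Equiv.ofBijective P (Finite.injective_iff_bijective.1 hP), fun _ => rfl⟩

lemma exists_compatible_itineraries_eq [LinearOrder A] {n : ℕ} {M : Multiset (Word A)}
    (hM : ∀ x ∈ M, x ∈ periodicPts shift) (hshift : M.map shift = M) (hcard : M.card = n) :
    ∃ (π : Equiv.Perm (Fin n)) (w : Fin n → A), Compatible π w ∧ itineraries π w = M := by
  obtain ⟨P, hP⟩ := exists_perm_copies hM hshift
  let V : copies M → Word A := fun t => (ofLex t.1).1
  have hV : Semiconj V P shift := fun t => congrArg (Prod.fst ∘ ofLex) (hP t)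
  have hcompat : Compatible P (head ∘ V) := fun t u htu => by
    have h := strictMono_head_prodMap_shift (show t.1 < u.1 from htu)
    simpa only [← hP, Prod.Lex.toLex_lt_toLex, Subtype.coe_lt_coe, comp_apply, V] using h
  let e : Fin n ≃o copies M := (copies M).orderIsoOfFin ((card_copies M).trans hcard)
  refine ⟨e.toEquiv.trans (P.trans e.symm.toEquiv), head ∘ V ∘ e, hcompat.comp_orderIso e, ?_⟩
  have hVe : Semiconj (V ∘ e) (e.symm ∘ P ∘ e) shift := fun i => by
    simp [hV.eq]
  calc itineraries (e.symm ∘ P ∘ e) (head ∘ V ∘ e)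
      = Finset.univ.val.map (V ∘ e) := congrArg (Multiset.map · _) (itinerary_head_comp hVe)
    _ = Finset.univ.val.map V := map_univ_val_comp_equiv e.toEquiv V
    _ = M := map_copies M

lemma bijOn_itineraries (A : Type*) [LinearOrder A] (n : ℕ) :
    Set.BijOn (fun c : Equiv.Perm (Fin n) × (Fin n → A) => itineraries c.1 c.2)
      {c | Compatible c.1 c.2}
      {M | (∀ x ∈ M, x ∈ periodicPts shift) ∧ M.map shift = M ∧ M.card = n} := by
  refine ⟨fun c _ => ⟨fun x hx => ?_, map_shift_itineraries c.1 c.2, by simp [itineraries]⟩,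
    fun c hc c' hc' heq => Prod.ext_iff.2 (hc.ext_itineraries hc' heq), ?_⟩
  · obtain ⟨i, -, rfl⟩ := Multiset.mem_map.1 hx
    exact (semiconj_itinerary c.1 c.2).mapsTo_periodicPts (c.1.injective.mem_periodicPts i)
  · rintro M ⟨hM, hshift, hcard⟩
    obtain ⟨π, w, h, heq⟩ := exists_compatible_itineraries_eq hM hshift hcard
    exact ⟨(π, w), h, heq⟩

end Itineraries

section Cycles

open Function

variable {Y : Type*}

lemma card_sameCycle_eq_minimalPeriod [Finite Y] (σ : Equiv.Perm Y) (x : Y) :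
    Nat.card {y // σ.SameCycle x y} = minimalPeriod σ x := by
  have := Fintype.ofFinite (MulAction.orbit (Subgroup.zpowers σ) x)
  have hper : minimalPeriod σ x = _ := MulAction.minimalPeriod_eq_card (a := σ) (b := x)
  rw [hper, ← Nat.card_eq_fintype_card]
  refine Nat.card_congr (Equiv.subtypeEquivRight fun y => ?_)
  simp only [MulAction.mem_orbit_iff, Subtype.exists, Subgroup.mk_smul, exists_prop,
    Subgroup.exists_mem_zpowers]
  rfl

/-- The set of cycles of a permutation, fixed points included. -/
abbrev Cycles (σ : Equiv.Perm Y) : Type _ := Quotient (Equiv.Perm.SameCycle.setoid σ)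

lemma sum_comp_mk_cycles [Fintype Y] {σ : Equiv.Perm Y} {i : ℕ}
    (hper : ∀ y, minimalPeriod σ y = i) (d : Cycles σ → ℕ) :
    ∑ y, d (Quotient.mk _ y) = i * ∑ q, d q := by
  rw [← Finset.sum_fiberwise' _ (Quotient.mk (Equiv.Perm.SameCycle.setoid σ)), Finset.mul_sum]
  refine Finset.sum_congr rfl fun q _ => ?_
  obtain ⟨x, rfl⟩ := Quotient.exists_rep q
  rw [Finset.sum_const, smul_eq_mul, ← hper x, ← card_sameCycle_eq_minimalPeriod,
    Nat.card_eq_fintype_card, Fintype.card_subtype]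
  congr 2
  ext y
  rw [Finset.mem_filter_univ, Finset.mem_filter_univ, Quotient.eq]
  exact Equiv.Perm.sameCycle_comm

lemma card_cycles [Finite Y] {σ : Equiv.Perm Y} {i N : ℕ} (hi : i ≠ 0)
    (hper : ∀ y, minimalPeriod σ y = i) (hN : i * N = Nat.card Y) : Nat.card (Cycles σ) = N := by
  have := Fintype.ofFinite Y
  have h := sum_comp_mk_cycles hper fun _ => 1
  refine Nat.eq_of_mul_eq_mul_left (Nat.pos_of_ne_zero hi) ?_
  simpa [hN] using h.symm

/-- Functions that are constant on the cycles of `σ`, as functions on the set of cycles. -/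
def cyclesFunEquiv [Finite Y] (σ : Equiv.Perm Y) (R : Type*) :
    (Cycles σ → R) ≃ {c : Y → R // ∀ y, c (σ y) = c y} where
  toFun d := ⟨fun y => d (Quotient.mk _ y), fun y => congrArg d <| Quotient.sound <|
    (Equiv.Perm.sameCycle_apply_left (f := σ)).2 (Equiv.Perm.SameCycle.refl σ y)⟩
  invFun c := Quotient.lift c.1 fun y z (hyz : σ.SameCycle y z) => by
    obtain ⟨p, rfl⟩ := hyz.exists_nat_pow_eq
    rw [Equiv.Perm.coe_pow]
    exact (congrFun (iterate_invariant (funext c.2) p) y).symm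
  left_inv d := funext fun q => Quotient.inductionOn q fun _ => rfl
  right_inv _ := rfl

lemma card_invariant_fun_sum_eq [Fintype Y] {σ : Equiv.Perm Y} {i N : ℕ} (hi : i ≠ 0)
    (hper : ∀ y, minimalPeriod σ y = i) (hN : i * N = Nat.card Y) (k : ℕ) :
    Nat.card {c : Y → ℕ // (∀ y, c (σ y) = c y) ∧ ∑ y, c y = i * k} = N.multichoose k := by
  have hsum (d : Cycles σ → ℕ) : ∑ q, d q = k ↔ ∑ y, (cyclesFunEquiv σ ℕ d).1 y = i * k := by
    rw [← Nat.mul_right_inj hi, ← sum_comp_mk_cycles hper]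
    rfl
  calc Nat.card {c : Y → ℕ // (∀ y, c (σ y) = c y) ∧ ∑ y, c y = i * k}
      = Nat.card {d : Cycles σ → ℕ // ∑ q, d q = k} := Nat.card_congr <|
        (Equiv.subtypeSubtypeEquivSubtypeInter (fun c : Y → ℕ => ∀ y, c (σ y) = c y)
          (fun c => ∑ y, c y = i * k)).symm.trans
        ((cyclesFunEquiv σ ℕ).subtypeEquiv hsum).symm
    _ = Nat.card (Sym (Cycles σ) k) := Nat.card_congr (Sym.equivNatSumOfFintype _ k).symm
    _ = N.multichoose k := by
      rw [Nat.card_eq_fintype_card, Sym.card_sym_eq_multichoose, ← Nat.card_eq_fintype_card,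
        card_cycles hi hper hN]

lemma card_support_eq_minimalPeriod [Fintype Y] [DecidableEq Y] {σ c : Equiv.Perm Y}
    (hc : c ∈ σ.cycleFactorsFinset) {x : Y} (hx : x ∈ c.support) :
    c.support.card = minimalPeriod σ x := by
  have hσx : σ x ≠ x :=
    Equiv.Perm.mem_support.1 (Equiv.Perm.mem_cycleFactorsFinset_support_le hc hx)
  rw [← card_sameCycle_eq_minimalPeriod, Nat.card_eq_fintype_card, Fintype.card_subtype,
    Equiv.Perm.cycle_is_cycleOf hx hc]
  congr 1
  ext y
  simpa using Equiv.Perm.mem_support_cycleOf_iff' hσx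

lemma card_minimalPeriod_eq [Fintype Y] [DecidableEq Y] (σ : Equiv.Perm Y) {i : ℕ} (hi : i ≠ 1) :
    (Finset.univ.filter fun x => minimalPeriod σ x = i).card = i * σ.cycleType.count i := by
  have mem_support {c : Equiv.Perm Y} (hc : c ∈ σ.cycleFactorsFinset) (x : Y) :
      σ.cycleOf x = c ↔ x ∈ c.support :=
    eq_comm.trans (Equiv.Perm.eq_cycleOf_of_mem_cycleFactorsFinset_iff σ c hc x)
  have hmaps : Set.MapsTo σ.cycleOf (Finset.univ.filter fun x => minimalPeriod σ x = i)
      (σ.cycleFactorsFinset.filter fun c => i = c.support.card) := fun x hx => by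
    obtain rfl : minimalPeriod σ x = i := by simpa using hx
    have hc : σ.cycleOf x ∈ σ.cycleFactorsFinset := by
      rw [Equiv.Perm.cycleOf_mem_cycleFactorsFinset_iff, Equiv.Perm.mem_support]
      exact fun h => hi (minimalPeriod_eq_one_iff_isFixedPt.2 h)
    exact Finset.mem_filter.2
      ⟨hc, (card_support_eq_minimalPeriod hc ((mem_support hc x).1 rfl)).symm⟩
  have hfibre : ∀ c ∈ σ.cycleFactorsFinset.filter (fun c => i = c.support.card),
      ((Finset.univ.filter fun x => minimalPeriod σ x = i).filter
        fun x => σ.cycleOf x = c).card = i := fun c hc => by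
    obtain ⟨hcσ, rfl⟩ := Finset.mem_filter.1 hc
    congr 1
    ext x
    simp only [Finset.mem_filter, Finset.mem_univ, true_and, mem_support hcσ,
      and_iff_right_iff_imp]
    exact fun hx => (card_support_eq_minimalPeriod hcσ hx).symm
  rw [Finset.card_eq_sum_card_fiberwise hmaps, Finset.sum_const_nat hfibre, mul_comm,
    Equiv.Perm.cycleType_def, Multiset.count_map]
  rfl

lemma count_minimalPeriod_eq (n : ℕ) (π : Equiv.Perm (Fin n)) (i : ℕ) :
    (Finset.univ.val.map (minimalPeriod π)).count i = i * (fullCycleType n π).count i := by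
  have hcount : (Finset.univ.val.map (minimalPeriod π)).count i =
      (Finset.univ.filter fun x => minimalPeriod π x = i).card := by
    simp only [Multiset.count_map, eq_comm (a := i)]
    rfl
  rw [hcount, fullCycleType, Multiset.count_add, Multiset.count_replicate]
  rcases eq_or_ne i 1 with rfl | hi
  · have hnone : π.cycleType.count 1 = 0 := Multiset.count_eq_zero.2 fun h =>
      (Equiv.Perm.two_le_of_mem_cycleType h).not_gt one_lt_two
    have hfix : (Finset.univ.filter fun x => minimalPeriod π x = 1) = π.supportᶜ := by
      ext x
      simp [minimalPeriod_eq_one_iff_isFixedPt, IsFixedPt]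
    rw [hnone, hfix, Finset.card_compl, Fintype.card_fin, if_pos rfl, zero_add, one_mul]
  · rw [card_minimalPeriod_eq π hi, if_neg hi.symm, add_zero]

lemma count_fullCycleType_eq_iff {n : ℕ} {m : ℕ → ℕ} (hm0 : m 0 = 0) (π : Equiv.Perm (Fin n)) :
    (∀ i, (fullCycleType n π).count i = m i) ↔
      ∀ i, (Finset.univ.val.map (minimalPeriod π)).count i = i * m i := by
  refine forall_congr' fun i => ?_
  rw [count_minimalPeriod_eq]
  rcases eq_or_ne i 0 with rfl | hi
  · have hnone : (fullCycleType n π).count 0 = 0 := by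
      refine Multiset.count_eq_zero.2 fun h => ?_
      rcases Multiset.mem_add.1 h with h | h
      · exact (Equiv.Perm.two_le_of_mem_cycleType h).not_gt two_pos
      · exact zero_ne_one (Multiset.eq_of_mem_replicate h)
    rw [hnone, hm0, zero_mul]
  · rw [Nat.mul_right_inj hi]

end Cycles

section PeriodicPoints

open Function

variable {X : Type*} {f : X → X}

lemma exists_perm_minimalPeriod_eq (f : X → X) {i : ℕ} (hi : i ≠ 0) :
    ∃ σ : Equiv.Perm {x // minimalPeriod f x = i},
      (∀ y, (σ y : X) = f y) ∧ ∀ y, minimalPeriod σ y = i := by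
  have periodic {x : X} (hx : minimalPeriod f x = i) : x ∈ periodicPts f :=
    minimalPeriod_pos_iff_mem_periodicPts.1 (Nat.pos_of_ne_zero (hx ▸ hi))
  have hf : Set.BijOn f {x | minimalPeriod f x = i} {x | minimalPeriod f x = i} := by
    refine ⟨fun x hx => (minimalPeriod_apply (periodic hx)).trans hx, fun x hx y hy =>
      (bijOn_periodicPts f).injOn (periodic hx) (periodic hy), fun x hx => ?_⟩
    obtain ⟨y, hy, rfl⟩ := (bijOn_periodicPts f).surjOn (periodic hx)
    exact ⟨y, (minimalPeriod_apply hy).symm.trans hx, rfl⟩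
  refine ⟨hf.equiv f, fun _ => rfl, fun y => ?_⟩
  have hval : Semiconj Subtype.val (hf.equiv f) f := fun _ => rfl
  refine Eq.trans (minimalPeriod_eq_minimalPeriod_iff.2 fun p => ?_) y.2
  rw [IsPeriodicPt, IsPeriodicPt, IsFixedPt, IsFixedPt, ← (hval.iterate_right p).eq,
    Subtype.val_inj]

lemma sum_count_fibre {ι : Type*} [DecidableEq ι] (g : X → ι) (i : ι) [Fintype {x // g x = i}]
    (M : Multiset X) :
    ∑ y : {x // g x = i}, M.count (y : X) = (M.map g).count i := by
  induction M using Multiset.induction with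
  | empty => simp
  | cons x M ih =>
    simp only [Multiset.count_cons, Finset.sum_add_distrib, ih, Multiset.map_cons]
    congr 1
    rcases eq_or_ne i (g x) with rfl | h
    · rw [if_pos rfl, Finset.sum_eq_single ⟨x, rfl⟩] <;> simp [Subtype.ext_iff]
    · rw [if_neg h]
      exact Finset.sum_eq_zero fun y _ => if_neg fun hy => h (y.2.symm.trans (congrArg g hy))

/-- A multiset whose elements lie over a finite set `S` of finite fibres of `g` is given by the
multiplicities of the elements of each of these fibres. -/
def countFibresEquiv {ι : Type*} (g : X → ι) (S : Finset ι)
    (hfin : ∀ i ∈ S, Finite {x // g x = i}) :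
    {M : Multiset X // ∀ x ∈ M, g x ∈ S} ≃ ∀ i : S, ({x // g x = i} → ℕ) where
  toFun M _ y := M.1.count (y : X)
  invFun c :=
    ⟨Finsupp.toMultiset <| Finsupp.ofSupportFinite
      (fun x => if hx : g x ∈ S then c ⟨g x, hx⟩ ⟨x, rfl⟩ else 0)
      ((S.finite_toSet.preimage' hfin).subset fun x hx => not_not.1 fun h => hx (dif_neg h)),
    fun x hx => not_not.1 fun h => by
      rw [Finsupp.mem_toMultiset, Finsupp.mem_support_iff] at hx
      exact hx (dif_neg h)⟩
  left_inv M := by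
    ext x
    rw [Finsupp.count_toMultiset, Finsupp.ofSupportFinite_coe]
    split_ifs with hx
    · rfl
    · exact (Multiset.count_eq_zero.2 fun h => hx (M.2 x h)).symm
  right_inv c := by
    funext ⟨i, hi⟩ ⟨x, hx⟩
    obtain rfl : g x = i := hx
    exact (Finsupp.count_toMultiset _ _).trans (dif_pos hi)

/-- The `f`-invariant multisets of which exactly `i * m i` elements have minimal period `i`.
They stand for the multisets of cycles of `f` consisting of `m i` cycles of length `i` for each
`i > 0`, each cycle being replaced by its elements. -/
def invariantMultisets (f : X → X) (m : ℕ → ℕ) : Set (Multiset X) :=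
  {M | M.map f = M ∧ ∀ i, (M.map (minimalPeriod f)).count i = i * m i}

lemma period_mem_of_mem_invariantMultisets {m : ℕ → ℕ} {S : Finset ℕ}
    (hm : ∀ i ∉ S, m i = 0) {M : Multiset X} (hM : M ∈ invariantMultisets f m) {i : ℕ}
    (hi : i ∈ M.map (minimalPeriod f)) : i ∈ S := by
  by_contra hS
  have hcount := hM.2 i
  rw [hm i hS, mul_zero, Multiset.count_eq_zero] at hcount
  exact hcount hi

lemma mem_periodicPts_of_mem_invariantMultisets {m : ℕ → ℕ} {M : Multiset X}
    (hM : M ∈ invariantMultisets f m) {x : X} (hx : x ∈ M) : x ∈ periodicPts f := by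
  refine minimalPeriod_pos_iff_mem_periodicPts.1 (Nat.pos_of_ne_zero fun h => ?_)
  have hcount := hM.2 0
  rw [zero_mul, Multiset.count_eq_zero] at hcount
  exact hcount (h ▸ Multiset.mem_map_of_mem _ hx)

lemma mem_invariantMultisets_iff {m : ℕ → ℕ} {S : Finset ℕ} (h0 : 0 ∉ S)
    (hm : ∀ i ∉ S, m i = 0) [∀ i : S, Fintype {x // minimalPeriod f x = i}]
    {M : Multiset X} (hM : ∀ x ∈ M, minimalPeriod f x ∈ S) :
    M ∈ invariantMultisets f m ↔
      ∀ i : S, (∀ y : {x // minimalPeriod f x = i}, M.count (f y) = M.count (y : X)) ∧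
        ∑ y : {x // minimalPeriod f x = i}, M.count (y : X) = i * m i := by
  have periodic {x : X} (hx : minimalPeriod f x ∈ S) : x ∈ periodicPts f :=
    minimalPeriod_pos_iff_mem_periodicPts.1 <| Nat.pos_of_ne_zero fun h => h0 (h ▸ hx)
  simp only [invariantMultisets, Set.mem_ofPred_eq,
    map_eq_self_iff_count_apply fun x hx => periodic (hM x hx), sum_count_fibre]
  refine ⟨fun h i => ⟨fun y => h.1 y (periodic (y.2.symm ▸ i.2)), h.2 i⟩, fun h =>
    ⟨fun x hx => ?_, fun i => ?_⟩⟩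
  · by_cases hS : minimalPeriod f x ∈ S
    · exact (h ⟨_, hS⟩).1 ⟨x, rfl⟩
    · have hSf : minimalPeriod f (f x) ∉ S := by rwa [minimalPeriod_apply hx]
      rw [Multiset.count_eq_zero_of_notMem (hS ∘ hM x),
        Multiset.count_eq_zero_of_notMem (hSf ∘ hM (f x))]
  · by_cases hS : i ∈ S
    · exact (h ⟨i, hS⟩).2
    · rw [hm i hS, mul_zero, Multiset.count_eq_zero, Multiset.mem_map]
      rintro ⟨x, hx, rfl⟩
      exact hS (hM x hx)

lemma card_invariantMultisets {m N : ℕ → ℕ} {S : Finset ℕ} (h0 : 0 ∉ S)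
    (hm : ∀ i ∉ S, m i = 0) (hfin : ∀ i ∈ S, Finite {x // minimalPeriod f x = i})
    (hN : ∀ i ∈ S, i * N i = Nat.card {x // minimalPeriod f x = i}) :
    Nat.card (invariantMultisets f m) = ∏ i ∈ S, (N i).multichoose (m i) := by
  have ne_zero (i : S) : (i : ℕ) ≠ 0 := fun h => h0 (h ▸ i.2)
  have (i : S) : Fintype {x // minimalPeriod f x = i} :=
    have := hfin i i.2
    Fintype.ofFinite _
  choose σ hσ hper using fun i : S => exists_perm_minimalPeriod_eq f (ne_zero i)
  have invariant_iff (M : {M : Multiset X // ∀ x ∈ M, minimalPeriod f x ∈ S}) :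
      M.1 ∈ invariantMultisets f m ↔
        ∀ i : S, (∀ y, countFibresEquiv _ S hfin M i (σ i y) = countFibresEquiv _ S hfin M i y) ∧
          ∑ y, countFibresEquiv _ S hfin M i y = i * m i := by
    simp only [mem_invariantMultisets_iff h0 hm M.2, ← hσ]
    rfl
  calc Nat.card (invariantMultisets f m)
      = Nat.card {c : ∀ i : S, ({x // minimalPeriod f x = i} → ℕ) //
          ∀ i, (∀ y, c i (σ i y) = c i y) ∧ ∑ y, c i y = i * m i} := Nat.card_congr <|
        (Equiv.subtypeSubtypeEquivSubtype fun hM x hx =>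
          period_mem_of_mem_invariantMultisets hm hM (Multiset.mem_map_of_mem _ hx)).symm.trans
          ((countFibresEquiv _ S hfin).subtypeEquiv invariant_iff)
    _ = ∏ i : S, Nat.card {c : {x // minimalPeriod f x = i} → ℕ //
          (∀ y, c (σ i y) = c y) ∧ ∑ y, c y = i * m i} :=
        (Nat.card_congr (Equiv.subtypePiEquivPi (p := fun (i : S)
          (c : {x // minimalPeriod f x = i} → ℕ) =>
            (∀ y, c (σ i y) = c y) ∧ ∑ y, c y = i * m i))).trans Nat.card_pi
    _ = ∏ i : S, (N i).multichoose (m i) := Finset.prod_congr rfl fun i _ =>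
        card_invariant_fun_sum_eq (ne_zero i) (hper i) (hN i i.2) (m i)
    _ = ∏ i ∈ S, (N i).multichoose (m i) :=
        Finset.prod_coe_sort S fun i => (N i).multichoose (m i)

end PeriodicPoints

section Moebius

open Function

lemma sum_card_minimalPeriod_eq {X : Type*} (f : X → X) {i : ℕ} (hi : i ≠ 0)
    (hfin : (ptsOfPeriod f i).Finite) :
    ∑ d ∈ i.divisors, Nat.card {x // minimalPeriod f x = d} = Nat.card (ptsOfPeriod f i) := by
  have mem_iff (x : X) : x ∈ ptsOfPeriod f i ↔ minimalPeriod f x ∈ i.divisors := by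
    rw [mem_ptsOfPeriod, isPeriodicPt_iff_minimalPeriod_dvd, Nat.mem_divisors, and_iff_left hi]
  have (d : i.divisors) : Finite {x // minimalPeriod f x = d} :=
    hfin.subset fun x (hx : minimalPeriod f x = d) => (mem_iff x).2 (hx.symm ▸ d.2)
  rw [← Nat.card_congr (Equiv.sigmaSubtypeFiberEquivSubtype _ mem_iff), Nat.card_sigma]
  exact (Finset.sum_coe_sort _ fun d => Nat.card {x // minimalPeriod f x = d}).symm

namespace Word

variable {A : Type*}

lemma mem_ptsOfPeriod_shift {i : ℕ} {x : Word A} :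
    x ∈ ptsOfPeriod shift i ↔ Function.Periodic (ofLex x) i := by
  rw [mem_ptsOfPeriod, IsPeriodicPt, IsFixedPt, ← ofLex_inj, funext_iff]
  simp only [ofLex_iterate_shift, Function.Periodic]

/-- A word fixed by `i` shifts is the periodic continuation of its first `i` letters. -/
def ptsOfPeriodShiftEquiv {i : ℕ} (hi : i ≠ 0) :
    ptsOfPeriod (shift : Word A → Word A) i ≃ (Fin i → A) where
  toFun x j := ofLex x.1 j
  invFun u := ⟨toLex fun j => u ⟨j % i, Nat.mod_lt j (Nat.pos_of_ne_zero hi)⟩,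
    Word.mem_ptsOfPeriod_shift.2 fun j => by simp⟩
  left_inv x := Subtype.ext <| ofLex_inj.1 <| funext fun j =>
    (mem_ptsOfPeriod_shift.1 x.2).map_mod_nat j
  right_inv u := funext fun j => congrArg u <| Fin.ext <| Nat.mod_eq_of_lt j.2

lemma finite_ptsOfPeriod_shift [Finite A] {i : ℕ} (hi : i ≠ 0) :
    (ptsOfPeriod (shift : Word A → Word A) i).Finite :=
  have := Finite.of_equiv _ (ptsOfPeriodShiftEquiv (A := A) hi).symm
  Set.toFinite _

lemma finite_minimalPeriod_shift_eq [Finite A] {i : ℕ} (hi : i ≠ 0) :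
    Finite {x : Word A // minimalPeriod shift x = i} :=
  (finite_ptsOfPeriod_shift hi).subset fun x (hx : minimalPeriod shift x = i) =>
    hx ▸ isPeriodicPt_minimalPeriod shift x

lemma card_minimalPeriod_shift_eq [Finite A] {i : ℕ} (hi : i ≠ 0) :
    (Nat.card {x : Word A // minimalPeriod shift x = i} : ℤ) =
      ∑ d ∈ i.divisors, ArithmeticFunction.moebius d * (Nat.card A : ℤ) ^ (i / d) := by
  have hsum : ∀ j > 0, ∑ d ∈ j.divisors,
      (Nat.card {x : Word A // minimalPeriod shift x = d} : ℤ) = (Nat.card A : ℤ) ^ j := by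
    intro j hj
    rw [← Nat.cast_sum, sum_card_minimalPeriod_eq _ hj.ne' (finite_ptsOfPeriod_shift hj.ne'),
      Nat.card_congr (ptsOfPeriodShiftEquiv hj.ne'), Nat.card_fun, Nat.card_fin, Nat.cast_pow]
  rw [← ArithmeticFunction.sum_eq_iff_sum_mul_moebius_eq.1 hsum i (Nat.pos_of_ne_zero hi)]
  exact Nat.sum_divisorsAntidiagonal fun d e => ArithmeticFunction.moebius d * (Nat.card A : ℤ) ^ e

end Word

end Moebius

section CycleType

open Function Word

lemma sum_filter_card_subtype {α β : Type*} [Fintype α] [Finite β] (p : α → Prop)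
    [DecidablePred p] (q : α → β → Prop) :
    ∑ a ∈ Finset.univ.filter p, Nat.card {b // q a b} =
      Nat.card {c : α × β // p c.1 ∧ q c.1 c.2} := by
  rw [Nat.card_congr (Equiv.subtypeProdEquivSigmaSubtype fun a b => p a ∧ q a b), Nat.card_sigma,
    Finset.sum_filter]
  refine Finset.sum_congr rfl fun a _ => ?_
  split_ifs with h <;> simp [h]

lemma card_of_mem_invariantMultisets {X : Type*} {f : X → X} {m : ℕ → ℕ} {n : ℕ}
    (hm : ∀ i ∉ Finset.Icc 1 n, m i = 0) (hsum : ∑ i ∈ Finset.Icc 1 n, i * m i = n)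
    {M : Multiset X} (hM : M ∈ invariantMultisets f m) : M.card = n := by
  rw [← Multiset.card_map (minimalPeriod f) M, ← Multiset.sum_count_eq_card fun _ =>
    period_mem_of_mem_invariantMultisets hm hM, Finset.sum_congr rfl fun i _ => hM.2 i, hsum]

lemma Compatible.itineraries_mem_invariantMultisets_iff {A : Type*} [LinearOrder A] {n : ℕ}
    {m : ℕ → ℕ} (hm0 : m 0 = 0) {π : Equiv.Perm (Fin n)} {w : Fin n → A} (h : Compatible π w) :
    itineraries π w ∈ invariantMultisets shift m ↔ ∀ i, (fullCycleType n π).count i = m i := by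
  rw [count_fullCycleType_eq_iff hm0, ← h.map_minimalPeriod_itineraries]
  exact and_iff_right (map_shift_itineraries π w)

lemma sum_card_compatible (A : Type*) [LinearOrder A] [Finite A] {n : ℕ} {m : ℕ → ℕ}
    (hm : ∀ i ∉ Finset.Icc 1 n, m i = 0) (hsum : ∑ i ∈ Finset.Icc 1 n, i * m i = n) :
    ∑ π ∈ Finset.univ.filter (fun π : Equiv.Perm (Fin n) =>
        ∀ i, (fullCycleType n π).count i = m i), Nat.card {w : Fin n → A // Compatible π w} =
      Nat.card (invariantMultisets (shift : Word A → Word A) m) := by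
  have hsub : invariantMultisets (shift : Word A → Word A) m ⊆
      {M | (∀ x ∈ M, x ∈ periodicPts shift) ∧ M.map shift = M ∧ M.card = n} := fun M hM =>
    ⟨fun x => mem_periodicPts_of_mem_invariantMultisets hM, hM.1,
      card_of_mem_invariantMultisets hm hsum hM⟩
  rw [sum_filter_card_subtype, ← Nat.card_congr ((bijOn_itineraries A n).subset_right hsub).equiv]
  refine Nat.card_congr (Equiv.subtypeEquivRight fun c => and_comm.trans ?_)
  exact and_congr_right fun hc =>
    (hc.itineraries_mem_invariantMultisets_iff (hm 0 (by simp))).symm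

lemma sum_card_compatible_fin {n : ℕ} {m : ℕ → ℕ} (hm : ∀ i ∉ Finset.Icc 1 n, m i = 0)
    (hsum : ∑ i ∈ Finset.Icc 1 n, i * m i = n) {N : ℕ → ℕ} (k : ℕ)
    (hN : ∀ i : ℕ, 1 ≤ i → (i : ℤ) * (N i : ℤ) =
      ∑ d ∈ i.divisors, ArithmeticFunction.moebius d * (k : ℤ) ^ (i / d)) :
    ∑ π ∈ Finset.univ.filter (fun π : Equiv.Perm (Fin n) =>
        ∀ i, (fullCycleType n π).count i = m i), Nat.card {w : Fin n → Fin k // Compatible π w} =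
      ∏ i ∈ Finset.Icc 1 n, (N i).multichoose (m i) := by
  have one_le {i : ℕ} (hi : i ∈ Finset.Icc 1 n) : 1 ≤ i := (Finset.mem_Icc.1 hi).1
  have ne_zero {i : ℕ} (hi : i ∈ Finset.Icc 1 n) : i ≠ 0 := Nat.one_le_iff_ne_zero.1 (one_le hi)
  have hcard : ∀ i ∈ Finset.Icc 1 n,
      i * N i = Nat.card {x : Word (Fin k) // minimalPeriod shift x = i} := fun i hi => by
    rw [← Nat.cast_inj (R := ℤ), Nat.cast_mul, hN i (one_le hi),
      card_minimalPeriod_shift_eq (ne_zero hi), Nat.card_fin]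
  rw [sum_card_compatible (Fin k) hm hsum]
  exact card_invariantMultisets (fun h => ne_zero h rfl) hm
    (fun i hi => finite_minimalPeriod_shift_eq (ne_zero hi)) hcard

end CycleType

theorem stmt18_general (R : Type*) [CommRing R] (n : ℕ) (hn : 1 ≤ n) (m : ℕ → ℕ)
    (hm0 : m 0 = 0) (hmhigh : ∀ i, n < i → m i = 0)
    (hsum : ∑ i ∈ Finset.Icc 1 n, i * m i = n)
    (f : ℕ → ℕ → ℕ)
    (hf : ∀ i : ℕ, 1 ≤ i → ∀ k : ℕ,
      (i : ℤ) * (f i k : ℤ)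
        = ∑ d ∈ i.divisors, ArithmeticFunction.moebius d * (k : ℤ) ^ (i / d)) :
    (∑ π ∈ (Finset.univ.filter fun π : Equiv.Perm (Fin n) =>
        ∀ i, Multiset.count i (fullCycleType n π) = m i),
        (PowerSeries.X : PowerSeries R) ^ (des n π + 1))
      = (1 - PowerSeries.X) ^ (n + 1)
          * PowerSeries.mk (fun k =>
              ∏ i ∈ (Finset.Icc 1 n).filter (fun i => 1 ≤ m i),
                ((f i k + m i - 1).choose (m i) : R)) := by
  have hn0 : n ≠ 0 := Nat.one_le_iff_ne_zero.1 hn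
  have hm : ∀ i ∉ Finset.Icc 1 n, m i = 0 := by grind
  rw [Finset.sum_congr rfl fun π _ =>
    X_pow_eq_one_sub_X_pow_mul_mk_choose R (Nat.succ_le_of_lt (des_lt hn0 π)), ← Finset.mul_sum]
  congr 1
  ext k
  have hprod : ∏ i ∈ (Finset.Icc 1 n).filter (fun i => 1 ≤ m i), (f i k + m i - 1).choose (m i) =
      ∏ i ∈ Finset.Icc 1 n, (f i k).multichoose (m i) := by
    simp only [← Nat.multichoose_eq]
    exact Finset.prod_filter_of_ne fun i _ h =>
      Nat.one_le_iff_ne_zero.2 fun hi => h (by rw [hi, Nat.multichoose_zero_right])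
  have hcount := sum_card_compatible_fin hm hsum k fun i hi => hf i hi k
  simp only [card_compatible hn0, ← hprod] at hcount
  simp only [map_sum, PowerSeries.coeff_mk]
  exact_mod_cast congrArg (Nat.cast (R := R)) hcount

theorem stmt18 (n : ℕ) (hn : 1 ≤ n) (m : ℕ → ℕ)
    (hm0 : m 0 = 0) (hmhigh : ∀ i, n < i → m i = 0)
    (hsum : ∑ i ∈ Finset.Icc 1 n, i * m i = n)
    (f : ℕ → ℕ → ℕ)
    (hf : ∀ i : ℕ, 1 ≤ i → ∀ k : ℕ,
      (i : ℤ) * (f i k : ℤ)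
        = ∑ d ∈ i.divisors, ArithmeticFunction.moebius d * (k : ℤ) ^ (i / d)) :
    (∑ π ∈ (Finset.univ.filter fun π : Equiv.Perm (Fin n) =>
        ∀ i, Multiset.count i (fullCycleType n π) = m i),
        (PowerSeries.X : PowerSeries ℚ) ^ (des n π + 1))
      = (1 - PowerSeries.X) ^ (n + 1)
          * PowerSeries.mk (fun k =>
              ∏ i ∈ (Finset.Icc 1 n).filter (fun i => 1 ≤ m i),
                ((f i k + m i - 1).choose (m i) : ℚ)) :=
  stmt18_general ℚ n hn m hm0 hmhigh hsum f hf

end
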